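/- Let a, b ∈ ℝ and let L : (ℝ → ℝ) → (ℝ → ℝ) be scale invariant with exponents a, b, i.e., for all A, B > 0 and all f : ℝ → ℝ, L(x ↦ B f(x/A))(x) = B^b A^a (L f)(x/A). Let M̂ : ℝ × ℝ → ℝ be differentiable, let A, B : ℝ → ℝ be differentiable and strictly positive, let τ : ℝ → ℝ be differentiable, and define M(x,t) = B(τ(t)) · M̂(x / A(τ(t)), τ(t)). If M satisfies ∂M/∂t (x,t) = (L M(·,t))(x) for all x, t, then for all y ∈ ℝ and t ∈ ℝ, writing σ = τ(t): [ (B′(σ)/B(σ)) M̂(y,σ) − (A′(σ)/A(σ)) · y · ∂M̂/∂y (y,σ) + ∂M̂/∂σ (y,σ) ] · τ′(t) = A(σ)^a B(σ)^{b−1} (L M̂(·,σ))(y). -/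

import Mathlib

/-!
At the point `x = A(τ(t)) y`, the product and chain rules express `∂M/∂t` as `τ'(t) B(σ)` times the
bracket on the left-hand side, while scale invariance turns `(L M(·,t))(x)` into
`B(σ)^b A(σ)^a (L M̂(·,σ))(y)`. Equating the two and dividing by `B(σ)` gives the result.
-/

open Function

section Rescale

variable {𝕜 E F : Type*}

/-- The rescaling operator `R_{A,B}`, `(R_{A,B} f)(x) = B f(x/A)`, for functions between spaces with
a scalar multiplication; `x/A` is encoded as `A⁻¹ • x`. -/
def rescale [Inv 𝕜] [SMul 𝕜 E] [SMul 𝕜 F] (A B : 𝕜) (f : E → F) : E → F :=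
  fun x => B • f (A⁻¹ • x)

lemma rescale_apply_smul [GroupWithZero 𝕜] [MulAction 𝕜 E] [SMul 𝕜 F] {A : 𝕜} (hA : A ≠ 0) (B : 𝕜)
    (f : E → F) (y : E) : rescale A B f (A • y) = B • f y := by
  rw [rescale, inv_smul_smul₀ hA]

lemma rescale_eq_mul_comp_div [Field 𝕜] (A B : 𝕜) (f : 𝕜 → 𝕜) :
    rescale A B f = fun x => B * f (x / A) := by
  ext x
  simp only [rescale, smul_eq_mul, div_eq_inv_mul]

/-- `L` is scale invariant with exponents `a, b`: `L R_{A,B} = R_{A, B^b A^a} L` for all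
`A, B > 0`. -/
def IsScaleInvariant [SMul ℝ E] [SMul ℝ F] (a b : ℝ) (L : (E → F) → E → F) : Prop :=
  ∀ ⦃A B : ℝ⦄, 0 < A → 0 < B → ∀ f, L (rescale A B f) = rescale A (B ^ b * A ^ a) (L f)

end Rescale

section Calculus

variable {𝕜 E G F : Type*} [NontriviallyNormedField 𝕜]
  [NormedAddCommGroup E] [NormedSpace 𝕜 E] [NormedAddCommGroup G] [NormedSpace 𝕜 G]
  [NormedAddCommGroup F] [NormedSpace 𝕜 F]

lemma fderiv_uncurry_eq_coprod {u : E → G → F} {p : E × G}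
    (hu : DifferentiableAt 𝕜 (uncurry u) p) :
    fderiv 𝕜 (uncurry u) p = (fderiv 𝕜 (u · p.2) p.1).coprod (fderiv 𝕜 (u p.1) p.2) := by
  have fderiv_left : fderiv 𝕜 (u · p.2) p.1 = fderiv 𝕜 (uncurry u) p ∘L .inl 𝕜 E G :=
    (hu.hasFDerivAt.comp (f := (·, p.2)) p.1 (hasFDerivAt_prodMk_left p.1 p.2)).fderiv
  have fderiv_right : fderiv 𝕜 (u p.1) p.2 = fderiv 𝕜 (uncurry u) p ∘L .inr 𝕜 E G :=
    (hu.hasFDerivAt.comp (f := (p.1, ·)) p.2 (hasFDerivAt_prodMk_right p.1 p.2)).fderiv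
  rw [fderiv_left, fderiv_right, ContinuousLinearMap.coprod_comp_inl_inr]

lemma hasDerivAt_apply_along_curve {u : E → 𝕜 → F} {c : 𝕜 → E} {c' : E} {σ : 𝕜}
    (hu : DifferentiableAt 𝕜 (uncurry u) (c σ, σ)) (hc : HasDerivAt c c' σ) :
    HasDerivAt (fun s => u (c s) s) (fderiv 𝕜 (u · σ) (c σ) c' + deriv (u (c σ)) σ) σ := by
  have deriv_along :=
    hu.hasFDerivAt.comp_hasDerivAt (f := fun s => (c s, s)) σ (hc.prodMk (hasDerivAt_id σ))
  rwa [fderiv_uncurry_eq_coprod hu, ContinuousLinearMap.coprod_apply, fderiv_apply_one_eq_deriv]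
    at deriv_along

lemma hasDerivAt_inv_smul_smul {A : 𝕜 → 𝕜} {A' σ : 𝕜} (hA : HasDerivAt A A' σ) (hσ : A σ ≠ 0)
    (y : E) : HasDerivAt (fun s => (A s)⁻¹ • A σ • y) (-(A' / A σ) • y) σ := by
  refine ((hA.fun_inv hσ).smul_const (A σ • y)).congr_deriv ?_
  match_scalars
  field_simp

lemma hasDerivAt_rescale_apply_smul {A B : 𝕜 → 𝕜} {A' B' σ : 𝕜} {u : E → 𝕜 → F} {y : E}
    (hu : DifferentiableAt 𝕜 (uncurry u) (y, σ))
    (hA : HasDerivAt A A' σ) (hB : HasDerivAt B B' σ) (hAσ : A σ ≠ 0) (hBσ : B σ ≠ 0) :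
    HasDerivAt (fun s => rescale (A s) (B s) (u · s) (A σ • y))
      (B σ • ((B' / B σ) • u y σ - (A' / A σ) • fderiv 𝕜 (u · σ) y y + deriv (u y) σ)) σ := by
  have hy : (A σ)⁻¹ • A σ • y = y := inv_smul_smul₀ hAσ y
  have deriv_u := hasDerivAt_apply_along_curve (hy.symm ▸ hu) (hasDerivAt_inv_smul_smul hA hAσ y)
  refine (hB.fun_smul deriv_u).congr_deriv ?_
  rw [hy, map_smul]
  match_scalars <;> field_simp

end Calculus

theorem dynamic_renormalization_equation_general {E F : Type*}
    [NormedAddCommGroup E] [NormedSpace ℝ E] [NormedAddCommGroup F] [NormedSpace ℝ F]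
    {a b : ℝ} {L : (E → F) → E → F} (hL : IsScaleInvariant a b L)
    {Mhat M : E → ℝ → F} {A B τ : ℝ → ℝ} {y : E} {t : ℝ}
    (hMhat : DifferentiableAt ℝ (uncurry Mhat) (y, τ t))
    (hA : DifferentiableAt ℝ A (τ t)) (hB : DifferentiableAt ℝ B (τ t))
    (hApos : 0 < A (τ t)) (hBpos : 0 < B (τ t)) (hτ : DifferentiableAt ℝ τ t)
    (hM : ∀ s, (M · s) = rescale (A (τ s)) (B (τ s)) (Mhat · (τ s)))
    (hEvol : deriv (M (A (τ t) • y)) t = L (M · t) (A (τ t) • y)) :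
    deriv τ t • ((deriv B (τ t) / B (τ t)) • Mhat y (τ t)
        - (deriv A (τ t) / A (τ t)) • fderiv ℝ (Mhat · (τ t)) y y + deriv (Mhat y) (τ t))
      = (A (τ t) ^ a * B (τ t) ^ (b - 1)) • L (Mhat · (τ t)) y := by
  have deriv_M := ((hasDerivAt_rescale_apply_smul hMhat hA.hasDerivAt hB.hasDerivAt
    hApos.ne' hBpos.ne').scomp t hτ.hasDerivAt).deriv
  have M_curve : M (A (τ t) • y) =
      (fun σ => rescale (A σ) (B σ) (Mhat · σ) (A (τ t) • y)) ∘ τ :=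
    funext fun s => congrFun (hM s) _
  rw [M_curve, deriv_M, hM, hL hApos hBpos, rescale_apply_smul hApos.ne', smul_comm] at hEvol
  rw [← smul_right_inj hBpos.ne', hEvol, smul_smul, Real.rpow_sub_one hBpos.ne']
  congr 1
  field_simp

/-- Dynamic renormalization of a scale-invariant evolution equation:
if `L` is scale invariant with exponents `a, b` and
`M(x,t) = B(τ(t)) M̂(x/A(τ(t)), τ(t))` solves `M_t = L M`, then the rescaled
solution satisfies
`(B'/B · M̂ − A'/A · y · M̂_y + M̂_σ) · τ' = A^a B^{b−1} (L M̂)`. -/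
theorem dynamic_renormalization_equation
    (a b : ℝ) (L : (ℝ → ℝ) → (ℝ → ℝ))
    (hL : ∀ A B : ℝ, 0 < A → 0 < B → ∀ (f : ℝ → ℝ) (x : ℝ),
      L (fun z => B * f (z / A)) x = B ^ b * A ^ a * L f (x / A))
    (Mhat : ℝ → ℝ → ℝ)
    (hMhat : Differentiable ℝ (fun p : ℝ × ℝ => Mhat p.1 p.2))
    (A B : ℝ → ℝ) (hA : Differentiable ℝ A) (hB : Differentiable ℝ B)
    (hApos : ∀ σ, 0 < A σ) (hBpos : ∀ σ, 0 < B σ)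
    (τ : ℝ → ℝ) (hτ : Differentiable ℝ τ)
    (M : ℝ → ℝ → ℝ)
    (hM : ∀ x t : ℝ, M x t = B (τ t) * Mhat (x / A (τ t)) (τ t))
    (hEvol : ∀ x t : ℝ, deriv (fun s => M x s) t = L (fun y => M y t) x) :
    ∀ (y t : ℝ),
      (deriv B (τ t) / B (τ t) * Mhat y (τ t)
        - deriv A (τ t) / A (τ t) * y * deriv (fun z => Mhat z (τ t)) y
        + deriv (fun s => Mhat y s) (τ t)) * deriv τ t
      = A (τ t) ^ a * B (τ t) ^ (b - 1) * L (fun z => Mhat z (τ t)) y := by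
  intro y t
  have hL' : IsScaleInvariant a b L := fun A B hA hB f => by
    simpa only [rescale_eq_mul_comp_div] using funext (hL A B hA hB f)
  simpa only [fderiv_eq_smul_deriv, smul_eq_mul, mul_comm (deriv τ t), ← mul_assoc] using
    dynamic_renormalization_equation_general hL' (hMhat (y, τ t)) (hA _) (hB _) (hApos _)
      (hBpos _) (hτ t) (fun s => by simpa only [rescale_eq_mul_comp_div] using funext (hM · s))
      (hEvol _ t)
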